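/- Let 𝔹 denote the closed Euclidean unit ball in ℝⁿ centered at the origin, and let f : 𝔹 → ℝⁿ be a continuous map satisfying ‖f(x) − x‖ ≤ 1/2 for all x ∈ 𝔹. Then the open Euclidean ball B(0, 1/2) of radius 1/2 centered at the origin is contained in f(𝔹). In particular f(𝔹) has nonempty interior. -/

import Mathlib

open MeasureTheory Metric Polynomial
open scoped NNReal Topology

section SurjectiveOfCompactPerturbation

variable {E : Type*} [NormedAddCommGroup E]

theorem exists_polynomial_eval_eq_det_one_add_smul [NormedSpace ℝ E] [FiniteDimensional ℝ E]
    (A : E →L[ℝ] E) :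
    ∃ P : ℝ[X], P.natDegree ≤ Module.finrank ℝ E ∧ ∀ t : ℝ, P.eval t = (1 + t • A).det := by
  let b := Module.finBasis ℝ E
  let M := LinearMap.toMatrix b b (A : E →ₗ[ℝ] E)
  refine ⟨((X : ℝ[X]) • M.map C + (1 : Matrix _ _ ℝ).map C).det, ?_, fun t ↦ ?_⟩
  · simpa using natDegree_det_X_add_C_le M 1
  · have h : LinearMap.toMatrix b b ((1 + t • A : E →L[ℝ] E) : E →ₗ[ℝ] E) = t • M + 1 := by
      rw [ContinuousLinearMap.toLinearMap_add, ContinuousLinearMap.toLinearMap_smul, map_add,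
        map_smul, add_comm]
      congr 1
      exact LinearMap.toMatrix_one b
    rw [ContinuousLinearMap.det, ← LinearMap.det_toMatrix b, h, ← coe_evalRingHom,
      RingHom.map_det]
    congr 1
    ext i j
    rw [RingHom.mapMatrix_apply, Matrix.map_apply]
    by_cases hij : i = j <;> simp [hij, mul_comm t]

theorem exists_polynomial_eval_eq_one_sub_mul_norm_sq [InnerProductSpace ℝ E] (d : ℝ) (x v : E) :
    ∃ Q : ℝ[X], Q.natDegree ≤ 2 ∧ ∀ t : ℝ, Q.eval t = 1 - d * ‖x + t • v‖ ^ 2 := by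
  refine ⟨C (-(d * ‖v‖ ^ 2)) * X ^ 2 + C (-(2 * d * inner ℝ x v)) * X + C (1 - d * ‖x‖ ^ 2),
    natDegree_quadratic_le, fun t ↦ ?_⟩
  rw [norm_add_sq_real, norm_smul, inner_smul_right, mul_pow, Real.norm_eq_abs, sq_abs]
  simp
  ring

/-- Extrapolation to `1` from finitely many nodes in `(0, ε)` is exact on polynomials of
degree at most `N`. -/
theorem exists_extrapolation_weights (N : ℕ) {ε : ℝ} (hε : 0 < ε) :
    ∃ w t : ℕ → ℝ, (∀ i, t i ∈ Set.Ioo 0 ε) ∧ ∀ P : ℝ[X], P.natDegree ≤ N →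
      P.eval 1 = ∑ i ∈ Finset.range (N + 1), w i * P.eval (t i) := by
  let t : ℕ → ℝ := fun i ↦ ε / (i + 2)
  have ht : Function.Injective t := fun i j hij ↦ by
    have hi : (i : ℝ) + 2 ≠ 0 := by positivity
    have hj : (j : ℝ) + 2 ≠ 0 := by positivity
    simp only [t] at hij
    rw [div_eq_div_iff hi hj] at hij
    have := mul_left_cancel₀ hε.ne' hij
    exact_mod_cast (add_right_cancel this).symm
  refine ⟨fun i ↦ (Lagrange.basis (Finset.range (N + 1)) t i).eval 1, t, fun i ↦ ⟨?_, ?_⟩, ?_⟩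
  · positivity
  · refine div_lt_self hε ?_
    have : (0 : ℝ) ≤ i := i.cast_nonneg
    linarith
  · intro P hP
    have hdeg : P.degree < (Finset.range (N + 1)).card := by
      rw [Finset.card_range]
      exact (degree_le_of_natDegree_le hP).trans_lt (by exact_mod_cast N.lt_succ_self)
    conv_lhs => rw [Lagrange.eq_interpolate ht.injOn hdeg]
    simp [Lagrange.interpolate_apply, eval_finsetSum, mul_comm]

theorem surjective_id_add_of_lipschitzWith [CompleteSpace E] {K : ℝ≥0} (hK : K < 1) {u : E → E}
    (hu : LipschitzWith K u) : Function.Surjective fun x ↦ x + u x := by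
  intro y
  have hc : ContractingWith K fun x ↦ y - u x :=
    ⟨hK, LipschitzWith.of_dist_le_mul fun a b ↦ by
      rw [dist_sub_left]
      exact hu.dist_le_mul a b⟩
  exact ⟨hc.fixedPoint, eq_sub_iff_add_eq.1 hc.fixedPoint_isFixedPt.symm⟩

theorem injective_id_add_of_lipschitzWith {K : ℝ≥0} (hK : K < 1) {u : E → E}
    (hu : LipschitzWith K u) : Function.Injective fun x ↦ x + u x := by
  intro a b hab
  have h1 : a - b = u b - u a := by
    simp only at hab
    rw [sub_eq_sub_iff_add_eq_add, hab, add_comm]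
  have h2 := hu.dist_le_mul b a
  rw [dist_eq_norm, ← h1, dist_comm, dist_eq_norm] at h2
  have h3 : (K : ℝ) < 1 := by exact_mod_cast hK
  have h4 : ‖a - b‖ = 0 := by nlinarith [norm_nonneg (a - b)]
  exact sub_eq_zero.1 (norm_eq_zero.1 h4)

theorem Function.Bijective.image_eq_of_eqOn_compl {α : Type*} {F : α → α}
    (hF : Function.Bijective F) {s : Set α} (hs : Set.EqOn F id sᶜ) : F '' s = s := by
  have h : F '' sᶜ = sᶜ := by rw [hs.image_eq, Set.image_id]
  rw [Set.image_compl_eq hF] at h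
  exact compl_injective h

theorem continuous_det_one_add_smul_fderiv [NormedSpace ℝ E] {h : E → E} (hh : ContDiff ℝ 1 h) (t : ℝ) :
    Continuous fun x ↦ (1 + t • fderiv ℝ h x).det :=
  ContinuousLinearMap.continuous_det.comp
    (continuous_const.add ((hh.continuous_fderiv one_ne_zero).const_smul t))

variable [MeasurableSpace E] [BorelSpace E]

theorem exists_forall_setIntegral_det_mul_comp_eq [NormedSpace ℝ E] [FiniteDimensional ℝ E]
    (μ : Measure E) [μ.IsAddHaarMeasure] {h : E → E} (hh : ContDiff ℝ 1 h)
    (hc : HasCompactSupport h) {s : Set E} (hs : MeasurableSet s) (hsupp : Function.support h ⊆ s) :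
    ∃ ε > (0 : ℝ), ∀ t ∈ Set.Ioo 0 ε, ∀ g : E → ℝ,
      ∫ x in s, (1 + t • fderiv ℝ h x).det * g (x + t • h x) ∂μ = ∫ x in s, g x ∂μ := by
  obtain ⟨K, hK⟩ := hh.lipschitzWith_of_hasCompactSupport hc one_ne_zero
  have hdet : ∀ᶠ A in 𝓝 (1 : E →L[ℝ] E), 0 < A.det :=
    ContinuousLinearMap.continuous_det.continuousAt.eventually
      (lt_mem_nhds (by simp [ContinuousLinearMap.det]))
  obtain ⟨η, hη, hball⟩ := Metric.eventually_nhds_iff.1 hdet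
  have hK1 : (0 : ℝ) < K + 1 := by positivity
  refine ⟨min 1 η / (K + 1), by positivity, fun t ht g ↦ ?_⟩
  have htK : t * K < min 1 η := by
    have := (lt_div_iff₀ hK1).1 ht.2
    linarith [ht.1]
  have hlip : LipschitzWith (t.toNNReal * K) fun x ↦ t • h x :=
    LipschitzWith.of_dist_le_mul fun a b ↦ by
      rw [dist_smul₀, Real.norm_of_nonneg ht.1.le, NNReal.coe_mul, Real.coe_toNNReal _ ht.1.le,
        mul_assoc]
      exact mul_le_mul_of_nonneg_left (hK.dist_le_mul a b) ht.1.le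
  have hlt : t.toNNReal * K < 1 := by
    rw [← NNReal.coe_lt_coe, NNReal.coe_mul, Real.coe_toNNReal _ ht.1.le]
    exact htK.trans_le (min_le_left _ _)
  have hinj := injective_id_add_of_lipschitzWith hlt hlip
  have himage : (fun x ↦ x + t • h x) '' s = s := by
    refine Function.Bijective.image_eq_of_eqOn_compl
      ⟨hinj, surjective_id_add_of_lipschitzWith hlt hlip⟩ fun x hx ↦ ?_
    simp [Function.notMem_support.1 fun hx' ↦ hx (hsupp hx')]
  have hderiv : ∀ x, HasFDerivAt (fun x ↦ x + t • h x) (1 + t • fderiv ℝ h x) x := fun x ↦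
    (hasFDerivAt_id x).add (((hh.differentiable one_ne_zero) x).hasFDerivAt.const_smul t)
  have hpos : ∀ x, 0 < (1 + t • fderiv ℝ h x).det := fun x ↦ by
    refine hball ?_
    rw [dist_eq_norm, add_sub_cancel_left, norm_smul, Real.norm_of_nonneg ht.1.le]
    exact (mul_le_mul_of_nonneg_left (norm_fderiv_le_of_lipschitz ℝ hK) ht.1.le).trans_lt
      (htK.trans_le (min_le_right _ _))
  have hcv := integral_image_eq_integral_abs_det_fderiv_smul μ hs
    (fun x _ ↦ (hderiv x).hasFDerivWithinAt) hinj.injOn g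
  rw [himage] at hcv
  simp_rw [hcv, abs_of_pos (hpos _), smul_eq_mul]

variable [InnerProductSpace ℝ E] [FiniteDimensional ℝ E]

theorem setIntegral_det_mul_comp_one_sub_mul_norm_sq_pow
    (μ : Measure E) [μ.IsAddHaarMeasure] {h : E → E} (hh : ContDiff ℝ 1 h)
    (hc : HasCompactSupport h) {s : Set E} (hs : IsCompact s) (hsupp : Function.support h ⊆ s)
    (p : E) (d : ℝ) (k : ℕ) :
    ∫ x in s, (1 + fderiv ℝ h x).det * (1 - d * ‖x + h x - p‖ ^ 2) ^ k ∂μ =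
      ∫ x in s, (1 - d * ‖x - p‖ ^ 2) ^ k ∂μ := by
  obtain ⟨ε, hε, hcv⟩ :=
    exists_forall_setIntegral_det_mul_comp_eq μ hh hc hs.measurableSet hsupp
  obtain ⟨w, t, ht, hw⟩ :=
    exists_extrapolation_weights (Module.finrank ℝ E + k * 2) hε
  have hsum : ∑ i ∈ Finset.range (Module.finrank ℝ E + k * 2 + 1), w i = 1 := by
    simpa using (hw 1 (by simp)).symm
  have hpt : ∀ x, (1 + fderiv ℝ h x).det * (1 - d * ‖x + h x - p‖ ^ 2) ^ k =
      ∑ i ∈ Finset.range (Module.finrank ℝ E + k * 2 + 1), w i *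
        ((1 + t i • fderiv ℝ h x).det * (1 - d * ‖x + t i • h x - p‖ ^ 2) ^ k) := fun x ↦ by
    obtain ⟨P, hPdeg, hP⟩ := exists_polynomial_eval_eq_det_one_add_smul (fderiv ℝ h x)
    obtain ⟨Q, hQdeg, hQ⟩ := exists_polynomial_eval_eq_one_sub_mul_norm_sq d (x - p) (h x)
    have := hw (P * Q ^ k) (natDegree_mul_le.trans
      (add_le_add hPdeg (natDegree_pow_le.trans (Nat.mul_le_mul_left k hQdeg))))
    simpa [hP, hQ, sub_add_eq_add_sub] using this
  have hint : ∀ i, IntegrableOn (fun x ↦ w i *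
      ((1 + t i • fderiv ℝ h x).det * (1 - d * ‖x + t i • h x - p‖ ^ 2) ^ k)) s μ := fun i ↦ by
    have h1 := continuous_det_one_add_smul_fderiv hh (t i)
    have h2 := hh.continuous
    exact (by fun_prop : Continuous fun x ↦ w i *
      ((1 + t i • fderiv ℝ h x).det *
        (1 - d * ‖x + t i • h x - p‖ ^ 2) ^ k)).continuousOn.integrableOn_compact hs
  simp_rw [hpt]
  rw [integral_finsetSum _ fun i _ ↦ hint i]
  simp_rw [integral_const_mul]
  rw [Finset.sum_congr rfl fun i _ ↦ by
    rw [hcv (t i) (ht i) fun y ↦ (1 - d * ‖y - p‖ ^ 2) ^ k]]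
  rw [← Finset.sum_mul, hsum, one_mul]

theorem surjective_id_add_of_contDiff_of_hasCompactSupport {h : E → E} (hh : ContDiff ℝ 1 h)
    (hc : HasCompactSupport h) : Function.Surjective fun x ↦ x + h x := by
  intro p
  by_contra! hp
  obtain ⟨r, hr⟩ := hc.isCompact.isBounded.subset_closedBall (0 : E)
  set r₀ := max r (‖p‖ + 1)
  set s := closedBall (0 : E) r₀
  have hs : IsCompact s := isCompact_closedBall _ _
  have hsupp : Function.support h ⊆ s :=
    (subset_tsupport h).trans (hr.trans (closedBall_subset_closedBall (le_max_left _ _)))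
  have hps : p ∈ ball (0 : E) r₀ := by
    rw [mem_ball_zero_iff]
    exact (lt_add_one _).trans_le (le_max_right _ _)
  have hcont : Continuous fun x ↦ ‖x + h x - p‖ := by
    have := hh.continuous
    fun_prop
  obtain ⟨a, -, ha⟩ := hs.exists_isMinOn ⟨p, ball_subset_closedBall hps⟩ hcont.continuousOn
  set δ := ‖a + h a - p‖
  have hδ : 0 < δ := norm_pos_iff.2 (sub_ne_zero.2 (hp a))
  have hge : ∀ x ∈ s, δ ≤ ‖x + h x - p‖ := fun x hx ↦ ha hx
  obtain ⟨R₁, hR₁⟩ := hs.exists_bound_of_continuousOn hcont.continuousOn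
  obtain ⟨R₂, hR₂⟩ := hs.exists_bound_of_continuousOn
    (f := fun x ↦ x - p) (by fun_prop : Continuous fun x : E ↦ x - p).continuousOn
  obtain ⟨M, hM⟩ := hs.exists_bound_of_continuousOn
    (continuous_det_one_add_smul_fderiv hh 1).continuousOn
  simp only [one_smul] at hM
  set R := max (max R₁ R₂) (2 * δ)
  have hRδ : 2 * δ ≤ R := le_max_right _ _
  have hR : 0 < R := by linarith
  set d := 1 / R ^ 2
  have hd : 0 < d := by positivity
  have hdR : d * R ^ 2 = 1 := by simp only [d]; field_simp
  have hbase : ∀ y : E, ‖y‖ ≤ R → 0 ≤ 1 - d * ‖y‖ ^ 2 := fun y hy ↦ by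
    have : d * ‖y‖ ^ 2 ≤ d * R ^ 2 := by gcongr
    linarith
  set c := 1 - d * δ ^ 2
  set c' := 1 - d * (δ / 2) ^ 2
  have hδR : d * δ ^ 2 ≤ d * R ^ 2 := by
    gcongr
    linarith
  have hdδ : 0 < d * δ ^ 2 := by positivity
  have hc0 : 0 ≤ c := by simp only [c]; linarith
  have hcc : c < c' := by simp only [c, c']; linarith
  have hc'0 : 0 < c' := hc0.trans_lt hcc
  have hM0 : 0 ≤ M := (norm_nonneg _).trans (hM p (ball_subset_closedBall hps))
  let μ : Measure E := volume
  set U := ball (0 : E) r₀ ∩ ball p (δ / 2)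
  have hU : IsOpen U := isOpen_ball.inter isOpen_ball
  have hUs : U ⊆ s := Set.inter_subset_left.trans ball_subset_closedBall
  have hUpos : 0 < μ.real U := by
    refine ENNReal.toReal_pos (hU.measure_pos μ ⟨p, hps, mem_ball_self (by positivity)⟩).ne' ?_
    exact ((measure_mono hUs).trans_lt hs.measure_lt_top).ne
  have hupper : ∀ k : ℕ,
      ∫ x in s, (1 + fderiv ℝ h x).det * (1 - d * ‖x + h x - p‖ ^ 2) ^ k ∂μ ≤
        M * c ^ k * μ.real s := fun k ↦ by
    refine (Real.le_norm_self _).trans (norm_setIntegral_le_of_norm_le_const hs.measure_lt_top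
      fun x hx ↦ ?_)
    have h0 : 0 ≤ 1 - d * ‖x + h x - p‖ ^ 2 := hbase _ (by
      have := hR₁ x hx
      rw [norm_norm] at this
      exact this.trans ((le_max_left _ _).trans (le_max_left _ _)))
    have h1 : 1 - d * ‖x + h x - p‖ ^ 2 ≤ c := by
      have : d * δ ^ 2 ≤ d * ‖x + h x - p‖ ^ 2 := by
        gcongr
        exact hge x hx
      simp only [c]
      linarith
    rw [norm_mul, norm_pow, Real.norm_of_nonneg h0]
    exact mul_le_mul (hM x hx) (pow_le_pow_left₀ h0 h1 k) (by positivity) hM0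
  have hlower : ∀ k : ℕ, c' ^ k * μ.real U ≤ ∫ x in s, (1 - d * ‖x - p‖ ^ 2) ^ k ∂μ := fun k ↦ by
    have hint : IntegrableOn (fun x ↦ (1 - d * ‖x - p‖ ^ 2) ^ k) s μ :=
      (by fun_prop : Continuous fun x : E ↦
        (1 - d * ‖x - p‖ ^ 2) ^ k).continuousOn.integrableOn_compact hs
    calc c' ^ k * μ.real U = ∫ _ in U, c' ^ k ∂μ := by
          rw [setIntegral_const, smul_eq_mul, mul_comm]
      _ ≤ ∫ x in U, (1 - d * ‖x - p‖ ^ 2) ^ k ∂μ := by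
          refine setIntegral_mono_on ?_ (hint.mono_set hUs) hU.measurableSet fun x hx ↦ ?_
          · exact integrableOn_const ((measure_mono hUs).trans_lt hs.measure_lt_top).ne
          · refine pow_le_pow_left₀ hc'0.le ?_ k
            have hx' : ‖x - p‖ ≤ δ / 2 := (mem_ball_iff_norm.1 hx.2).le
            simp only [c']
            gcongr
      _ ≤ _ := by
          refine setIntegral_mono_set hint ?_ (Filter.Eventually.of_forall hUs)
          refine (ae_restrict_iff' hs.measurableSet).2 (Filter.Eventually.of_forall fun x hx ↦ ?_)
          exact pow_nonneg (hbase _ ((hR₂ x hx).trans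
            ((le_max_right _ _).trans (le_max_left _ _)))) k
  have hineq : ∀ k : ℕ, μ.real U ≤ M * μ.real s * (c / c') ^ k := fun k ↦ by
    have h1 := (hlower k).trans_eq
      (setIntegral_det_mul_comp_one_sub_mul_norm_sq_pow μ hh hc hs hsupp p d k).symm
    have h2 := h1.trans (hupper k)
    rw [div_pow, mul_div_assoc', le_div_iff₀ (by positivity)]
    linarith
  have hlim : Filter.Tendsto (fun k : ℕ ↦ M * μ.real s * (c / c') ^ k) Filter.atTop (𝓝 0) := by
    simpa using (tendsto_pow_atTop_nhds_zero_of_lt_one (div_nonneg hc0 hc'0.le)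
      ((div_lt_one hc'0).2 hcc)).const_mul (M * μ.real s)
  exact hUpos.not_ge (ge_of_tendsto' hlim hineq)

end SurjectiveOfCompactPerturbation

theorem ball_subset_image_of_norm_sub_le {E : Type*} [NormedAddCommGroup E]
    [InnerProductSpace ℝ E] [FiniteDimensional ℝ E] {f : E → E}
    (hf : ContinuousOn f (closedBall 0 1)) {ρ : ℝ}
    (hbound : ∀ x ∈ closedBall (0 : E) 1, ‖f x - x‖ ≤ ρ) :
    ball (0 : E) (1 - ρ) ⊆ f '' closedBall (0 : E) 1 := by
  intro y hy
  by_contra hne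
  rw [mem_ball_zero_iff] at hy
  have hcomp : IsCompact (f '' closedBall (0 : E) 1) :=
    (isCompact_closedBall _ _).image_of_continuousOn hf
  obtain ⟨δ, hδ, hball⟩ := Metric.isOpen_iff.1 hcomp.isClosed.isOpen_compl y hne
  let proj : E → E := fun x ↦ (max 1 ‖x‖)⁻¹ • x
  have hproj_mem : ∀ x, proj x ∈ closedBall (0 : E) 1 := fun x ↦ by
    have h1 : 0 < max 1 ‖x‖ := zero_lt_one.trans_le (le_max_left _ _)
    rw [mem_closedBall_zero_iff, norm_smul, norm_inv, Real.norm_of_nonneg h1.le,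
      inv_mul_le_one₀ h1]
    exact le_max_right _ _
  have hproj_eq : ∀ x ∈ closedBall (0 : E) 1, proj x = x := fun x hx ↦ by
    simp [proj, max_eq_left (mem_closedBall_zero_iff.1 hx)]
  have hproj : Continuous proj :=
    ((continuous_const.max continuous_norm).inv₀
      fun x ↦ (zero_lt_one.trans_le (le_max_left _ _)).ne').smul continuous_id
  let χ : ContDiffBump (0 : E) := ⟨1, 2, one_pos, one_lt_two⟩
  let u : E → E := fun x ↦ χ x • (f (proj x) - proj x)
  have hu : Continuous u :=
    χ.continuous.smul ((hf.comp_continuous hproj hproj_mem).sub hproj)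
  have hu_norm : ∀ x, ‖u x‖ ≤ ρ := fun x ↦ by
    rw [norm_smul, Real.norm_of_nonneg χ.nonneg]
    exact (mul_le_of_le_one_left (norm_nonneg _) χ.le_one).trans (hbound _ (hproj_mem x))
  set η := min δ (1 - ρ - ‖y‖)
  have hη : 0 < η := lt_min hδ (by linarith)
  have hfar : ∀ x, η ≤ ‖x + u x - y‖ := fun x ↦ by
    by_cases hx : x ∈ closedBall (0 : E) 1
    · have hux : x + u x = f x := by
        simp [u, hproj_eq x hx, χ.one_of_mem_closedBall hx]
      rw [hux]
      by_contra! hlt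
      exact hball (mem_ball_iff_norm.2 (hlt.trans_le (min_le_left _ _)))
        (Set.mem_image_of_mem f hx)
    · rw [mem_closedBall_zero_iff, not_le] at hx
      have h1 := norm_sub_le_norm_add x (u x)
      have h2 := norm_sub_norm_le (x + u x) y
      exact (min_le_right _ _).trans (by linarith [hu_norm x])
  obtain ⟨h, hh, hdist, hsupp⟩ :=
    hu.exists_contDiff_approx 1 (ε := fun _ ↦ η) continuous_const fun _ ↦ hη
  have hc : HasCompactSupport h :=
    (χ.hasCompactSupport.smul_right (f' := fun x ↦ f (proj x) - proj x)).mono hsupp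
  borelize E
  obtain ⟨x, hx⟩ := surjective_id_add_of_contDiff_of_hasCompactSupport hh hc y
  have h1 := hdist x
  rw [dist_comm, dist_eq_norm, ← add_sub_add_left_eq_sub (u x) (h x) x] at h1
  simp only at hx
  rw [hx] at h1
  exact (hfar x).not_gt h1

/-- If `f` is continuous on the closed Euclidean unit ball `𝔹 ⊂ ℝⁿ` and
`‖f x − x‖ ≤ 1/2` on `𝔹`, then the open ball `B(0, 1/2)` is contained in `f(𝔹)`;
in particular `f(𝔹)` has nonempty interior. -/
theorem ball_subset_image_of_close_to_id (n : ℕ)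
    (f : EuclideanSpace ℝ (Fin n) → EuclideanSpace ℝ (Fin n))
    (hf : ContinuousOn f (Metric.closedBall (0 : EuclideanSpace ℝ (Fin n)) 1))
    (hbound : ∀ x ∈ Metric.closedBall (0 : EuclideanSpace ℝ (Fin n)) 1,
      ‖f x - x‖ ≤ 1 / 2) :
    Metric.ball (0 : EuclideanSpace ℝ (Fin n)) (1 / 2) ⊆
      f '' Metric.closedBall (0 : EuclideanSpace ℝ (Fin n)) 1 ∧
    (interior (f '' Metric.closedBall (0 : EuclideanSpace ℝ (Fin n)) 1)).Nonempty := by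
  have hsub : Metric.ball (0 : EuclideanSpace ℝ (Fin n)) (1 / 2) ⊆
      f '' Metric.closedBall (0 : EuclideanSpace ℝ (Fin n)) 1 := by
    have h := ball_subset_image_of_norm_sub_le hf hbound
    rwa [sub_half] at h
  exact ⟨hsub, 0, interior_maximal hsub isOpen_ball (mem_ball_self (by norm_num))⟩
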